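/- arXiv:1812.05261 — 2 statements merged into one kernel-verified Lean document; each statement's English description precedes it below -/
import Mathlib

section
/- Let h, w be positive integers. The number of intervals I of the product poset Fin h × Fin w such that both coordinate projections of I are surjective (every row index in Fin h and every column index in Fin w occurs in I) equals the Narayana number N(h+w−1, h) = (1/(h+w−1)) · C(h+w−1, h−1) · C(h+w−1, w−1). -/
open Classical

variable {P : Type} [PartialOrder P]

/-- Convexity of a subset of a poset. -/
def IsConvexSet (I : Set P) : Prop :=
  ∀ ⦃a b c : P⦄, a ∈ I → c ∈ I → a ≤ b → b ≤ c → b ∈ I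

/-- Connectedness of a subset of a poset: any two elements are joined by a
sequence inside the subset in which consecutive elements are comparable. -/
def IsConnectedSet (I : Set P) : Prop :=
  ∀ a ∈ I, ∀ b ∈ I,
    Relation.ReflTransGen (fun u v : P => u ∈ I ∧ v ∈ I ∧ (u ≤ v ∨ v ≤ u)) a b

/-- An interval of a poset: a nonempty, convex and connected subset. -/
def IsIntervalSet (I : Set P) : Prop :=
  I.Nonempty ∧ IsConvexSet I ∧ IsConnectedSet I

/-!
A convex set with nonempty rows is a stack of row segments `[lᵢ, rᵢ]` whose endpoints `l` and `r`
are antitone. It is connected iff consecutive segments satisfy `lᵢ ≤ rᵢ₊₁`, and then its columns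
are all nonempty iff the first segment ends in the last column and the last one starts in column
`0`. So the full intervals are the chains of rows starting below the virtual row `(m, m)`, where
`m` is the last column. Removing the first row gives a recursion for the number of chains below
`(a, b)`, which is solved by the `2 × 2` determinant
`C(a+k, k) C(b+k+1, k+1) - C(a+k, k+1) C(b+k+1, k)`; at `a = b = m` it is the Narayana number.
-/

/-- One step of the paths in the definition of `IsConnectedSet`. -/
abbrev ComparableIn (I : Set P) (u v : P) : Prop := u ∈ I ∧ v ∈ I ∧ (u ≤ v ∨ v ≤ u)

instance comparableIn_symm (I : Set P) : Std.Symm (ComparableIn I) where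
  symm _ _ h := ⟨h.2.1, h.1, h.2.2.symm⟩

theorem isConnectedSet_of_forall_reflTransGen {I : Set P} (x₀ : P)
    (h : ∀ a ∈ I, Relation.ReflTransGen (ComparableIn I) a x₀) : IsConnectedSet I :=
  fun a ha b hb => (h a ha).trans (Relation.ReflTransGen.stdSymm.symm _ _ (h b hb))

theorem IsConnectedSet.exists_comparable_across {I : Set P} (hI : IsConnectedSet I) (s : Set P)
    {a b : P} (ha : a ∈ I) (has : a ∈ s) (hb : b ∈ I) (hbs : b ∉ s) :
    ∃ u ∈ I, u ∈ s ∧ ∃ v ∈ I, v ∉ s ∧ (u ≤ v ∨ v ≤ u) := by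
  by_contra! hno
  have stays_in : ∀ x, Relation.ReflTransGen (ComparableIn I) a x → x ∈ s := by
    intro x hx
    induction hx with
    | refl => exact has
    | @tail u v _ huv hus =>
      by_contra hvs
      have hincomp := hno u huv.1 hus v huv.2.1 hvs
      exact huv.2.2.elim hincomp.1 hincomp.2
  exact hbs (stays_in b (hI a ha b hb))

section RowEndpoints

variable {α β : Type} [PartialOrder α] [LinearOrder β] {I : Set (α × β)} {l r : α → β}

theorem IsConvexSet.antitone_of_isLeast (hI : IsConvexSet I)
    (hl : ∀ i, IsLeast {j | (i, j) ∈ I} (l i)) : Antitone l := by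
  intro i i' hii'
  by_contra! hlt
  have hmem : (i', l i) ∈ I := hI (hl i).1 (hl i').1 ⟨hii', le_rfl⟩ ⟨le_rfl, hlt.le⟩
  exact hlt.not_ge ((hl i').2 hmem)

theorem IsConvexSet.antitone_of_isGreatest (hI : IsConvexSet I)
    (hr : ∀ i, IsGreatest {j | (i, j) ∈ I} (r i)) : Antitone r := by
  intro i i' hii'
  by_contra! hlt
  have hmem : (i, r i') ∈ I := hI (hr i).1 (hr i').1 ⟨le_rfl, hlt.le⟩ ⟨hii', le_rfl⟩
  exact hlt.not_ge ((hr i).2 hmem)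

theorem IsConvexSet.mem_iff_mem_Icc (hI : IsConvexSet I)
    (hl : ∀ i, IsLeast {j | (i, j) ∈ I} (l i)) (hr : ∀ i, IsGreatest {j | (i, j) ∈ I} (r i))
    {x : α × β} : x ∈ I ↔ x.2 ∈ Set.Icc (l x.1) (r x.1) :=
  ⟨fun hx => ⟨(hl x.1).2 hx, (hr x.1).2 hx⟩,
    fun hx => hI (hl x.1).1 (hr x.1).1 ⟨le_rfl, hx.1⟩ ⟨le_rfl, hx.2⟩⟩

end RowEndpoints

theorem IsConnectedSet.isLeast_le_isGreatest_of_covBy {α β : Type} [LinearOrder α] [LinearOrder β]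
    {I : Set (α × β)} {l r : α → β} (hconn : IsConnectedSet I) (hconv : IsConvexSet I)
    (hl : ∀ i, IsLeast {j | (i, j) ∈ I} (l i)) (hr : ∀ i, IsGreatest {j | (i, j) ∈ I} (r i))
    {i i' : α} (hii' : i ⋖ i') : l i ≤ r i' := by
  obtain ⟨u, hu, hui, v, hv, hvi, huv⟩ := hconn.exists_comparable_across {x | x.1 ≤ i}
    (hl i).1 (le_refl i) (hl i').1 hii'.lt.not_ge
  have hi'v : i' ≤ v.1 := hii'.ge_of_gt (not_le.1 hvi)
  have huv : u ≤ v := huv.resolve_right fun hvu => hvi (hvu.1.trans hui)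
  calc
    l i ≤ l u.1 := hconv.antitone_of_isLeast hl hui
    _ ≤ u.2 := (hl u.1).2 hu
    _ ≤ v.2 := huv.2
    _ ≤ r v.1 := (hr v.1).2 hv
    _ ≤ r i' := hconv.antitone_of_isGreatest hr hi'v

/-- A subset of `α × β` that is an interval and projects onto both factors. -/
def IsFullInterval {α β : Type} [PartialOrder α] [PartialOrder β] (I : Set (α × β)) : Prop :=
  IsIntervalSet I ∧ (∀ i, ∃ j, (i, j) ∈ I) ∧ ∀ j, ∃ i, (i, j) ∈ I

/-- The rows that may follow the row `p` in a staircase. A row `q : ℕ × ℕ` stands for the segment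
of columns from `q.1` to `q.2`; membership says `q.1 ≤ p.1 ≤ q.2 ≤ p.2`. -/
def rowsBelow (p : ℕ × ℕ) : Finset (ℕ × ℕ) := Finset.Icc (0, p.1) p

theorem mem_rowsBelow {p q : ℕ × ℕ} : q ∈ rowsBelow p ↔ q.1 ≤ p.1 ∧ p.1 ≤ q.2 ∧ q.2 ≤ p.2 := by
  simp only [rowsBelow, Finset.mem_Icc, Prod.le_def, zero_le, true_and]
  tauto

/-- A staircase below the row `p`: a sequence of rows, each below its predecessor and the first one
below `p`, of which the last one starts in column `0`. The row `p` itself is not part of it. -/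
structure IsStaircase {k : ℕ} (p : ℕ × ℕ) (f : Fin (k + 1) → ℕ × ℕ) : Prop where
  zero_mem : f 0 ∈ rowsBelow p
  succ_mem : ∀ i : Fin k, f i.succ ∈ rowsBelow (f i.castSucc)
  fst_last : (f (Fin.last k)).1 = 0

/-- The staircases of `k` rows below `p`, generated row by row. For `k = 0` the row `p` itself has
to start in column `0`. -/
def staircases : (k : ℕ) → ℕ × ℕ → Finset (Fin k → ℕ × ℕ)
  | 0, p => if p.1 = 0 then Finset.univ else ∅
  | k + 1, p => ((rowsBelow p).sigma (staircases k)).image fun x => Fin.cons x.1 x.2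

theorem mem_staircases_zero {p : ℕ × ℕ} {g : Fin 0 → ℕ × ℕ} : g ∈ staircases 0 p ↔ p.1 = 0 := by
  unfold staircases
  split_ifs with hp
  · exact iff_of_true (Finset.mem_univ g) hp
  · exact iff_of_false (Finset.notMem_empty g) hp

theorem cons_mem_staircases {k : ℕ} {p q : ℕ × ℕ} {g : Fin k → ℕ × ℕ} :
    Fin.cons q g ∈ staircases (k + 1) p ↔ q ∈ rowsBelow p ∧ g ∈ staircases k q := by
  simp [staircases]

theorem isStaircase_cons {k : ℕ} {p q : ℕ × ℕ} {g : Fin (k + 1) → ℕ × ℕ} :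
    IsStaircase p (Fin.cons q g : Fin (k + 2) → ℕ × ℕ) ↔ q ∈ rowsBelow p ∧ IsStaircase q g := by
  constructor
  · rintro ⟨hzero, hsucc, hlast⟩
    exact ⟨hzero, hsucc 0, fun i => hsucc i.succ, hlast⟩
  · rintro ⟨hq, hzero, hsucc, hlast⟩
    exact ⟨hq, Fin.cases hzero hsucc, hlast⟩

theorem mem_staircases {k : ℕ} {p : ℕ × ℕ} {f : Fin (k + 1) → ℕ × ℕ} :
    f ∈ staircases (k + 1) p ↔ IsStaircase p f := by
  induction k generalizing p with
  | zero =>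
    rw [← Fin.cons_self_tail f, cons_mem_staircases, mem_staircases_zero]
    exact ⟨fun ⟨hzero, hlast⟩ => ⟨hzero, fun i => i.elim0, hlast⟩,
      fun hf => ⟨hf.zero_mem, hf.fst_last⟩⟩
  | succ k ih =>
    rw [← Fin.cons_self_tail f, cons_mem_staircases, isStaircase_cons, ih]

theorem card_staircases_zero (p : ℕ × ℕ) :
    (staircases 0 p).card = if p.1 = 0 then 1 else 0 := by
  unfold staircases
  split_ifs <;> rfl

theorem card_staircases_succ (k a b : ℕ) : (staircases (k + 1) (a, b)).card =
    ∑ x ∈ Finset.Icc 0 a, ∑ y ∈ Finset.Icc a b, (staircases k (x, y)).card := by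
  have cons_injective : Function.Injective
      fun x : (_ : ℕ × ℕ) × (Fin k → ℕ × ℕ) => (Fin.cons x.1 x.2 : Fin (k + 1) → ℕ × ℕ) := by
    rintro ⟨q, g⟩ ⟨q', g'⟩ h
    obtain ⟨rfl, rfl⟩ := Fin.cons_inj.1 h
    rfl
  rw [staircases, Finset.card_image_of_injective _ cons_injective, Finset.card_sigma, rowsBelow,
    ← Finset.Icc_product_Icc, Finset.sum_product]

theorem sum_Icc_choose_add (c k : ℕ) {a b : ℕ} (hab : a ≤ b + 1) :
    ∑ x ∈ Finset.Icc a b, ((x + c).choose k : ℤ) =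
      (b + 1 + c).choose (k + 1) - (a + c).choose (k + 1) := by
  rw [← Finset.Ico_add_one_right_eq_Icc,
    ← Finset.sum_Ico_sub (fun x => ((x + c).choose (k + 1) : ℤ)) hab]
  refine Finset.sum_congr rfl fun x _ => ?_
  rw [add_right_comm x 1 c, Nat.choose_succ_succ]
  push_cast
  ring

theorem card_staircases (k : ℕ) {a b : ℕ} (hab : a ≤ b) :
    ((staircases (k + 1) (a, b)).card : ℤ) =
      (a + k).choose k * (b + (k + 1)).choose (k + 1)
        - (a + k).choose (k + 1) * (b + (k + 1)).choose k := by
  induction k generalizing a b with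
  | zero =>
    rw [card_staircases_succ, Finset.sum_comm]
    simp [card_staircases_zero, Nat.cast_sub (Nat.le_succ_of_le hab)]
  | succ k ih =>
    have expand : ((staircases (k + 2) (a, b)).card : ℤ) =
        ∑ x ∈ Finset.Icc 0 a, ∑ y ∈ Finset.Icc a b,
          ((x + k).choose k * (y + (k + 1)).choose (k + 1)
            - (x + k).choose (k + 1) * (y + (k + 1)).choose k : ℤ) := by
      rw [card_staircases_succ]
      push_cast
      refine Finset.sum_congr rfl fun x hx => Finset.sum_congr rfl fun y hy => ih ?_
      exact (Finset.mem_Icc.1 hx).2.trans (Finset.mem_Icc.1 hy).1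
    rw [expand]
    simp only [Finset.sum_sub_distrib, ← Finset.mul_sum, ← Finset.sum_mul,
      sum_Icc_choose_add _ _ (Nat.zero_le (a + 1)), sum_Icc_choose_add _ _ (Nat.le_succ_of_le hab),
      zero_add, Nat.choose_succ_self, Nat.choose_eq_zero_of_lt (show k < k + 1 + 1 by omega)]
    rw [add_right_comm a 1 k, add_right_comm b 1 (k + 1), add_assoc a k 1, add_assoc b (k + 1) 1]
    push_cast
    ring

theorem card_staircases_self (k m : ℕ) : (staircases (k + 1) (m, m)).card =
    (k + m + 1).choose k * (k + m + 1).choose m / (k + m + 1) := by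
  have choose_symm : (k + m + 1).choose m = (k + m + 1).choose (k + 1) :=
    Nat.choose_symm_of_eq_add (by ring)
  have absorb := Nat.add_one_mul_choose_eq (k + m) k
  have absorb_compl := Nat.choose_mul_succ_eq (k + m) (k + 1)
  have ratio := Nat.choose_succ_right_eq (k + m + 1) k
  rw [show k + m + 1 - (k + 1) = m by omega] at absorb_compl
  rw [show k + m + 1 - k = m + 1 by omega] at ratio
  refine (Nat.div_eq_of_eq_mul_left (Nat.succ_pos _) ?_).symm
  rw [choose_symm]
  zify at absorb absorb_compl ratio ⊢
  rw [card_staircases k le_rfl, add_comm m k, show m + (k + 1) = k + m + 1 by ring]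
  linear_combination (-((k + m + 1).choose (k + 1) : ℤ)) * absorb
    + ((k + m + 1).choose k : ℤ) * absorb_compl - ((k + m + 1).choose (k + 1) : ℤ) * ratio

namespace IsStaircase

variable {k : ℕ} {p : ℕ × ℕ} {f : Fin (k + 1) → ℕ × ℕ}

theorem antitone_fst (hf : IsStaircase p f) : Antitone fun i => (f i).1 :=
  Fin.antitone_iff_succ_le.2 fun i => (mem_rowsBelow.1 (hf.succ_mem i)).1

theorem antitone_snd (hf : IsStaircase p f) : Antitone fun i => (f i).2 :=
  Fin.antitone_iff_succ_le.2 fun i => (mem_rowsBelow.1 (hf.succ_mem i)).2.2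

theorem fst_le_snd (hf : IsStaircase p f) (i : Fin (k + 1)) : (f i).1 ≤ (f i).2 := by
  have fst_le_snd_of_mem {p q : ℕ × ℕ} (hq : q ∈ rowsBelow p) : q.1 ≤ q.2 :=
    (mem_rowsBelow.1 hq).1.trans (mem_rowsBelow.1 hq).2.1
  cases i using Fin.cases with
  | zero => exact fst_le_snd_of_mem hf.zero_mem
  | succ i => exact fst_le_snd_of_mem (hf.succ_mem i)

theorem snd_le (hf : IsStaircase p f) (i : Fin (k + 1)) : (f i).2 ≤ p.2 :=
  (hf.antitone_snd (Fin.zero_le i)).trans (mem_rowsBelow.1 hf.zero_mem).2.2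

theorem exists_mem_Icc (hf : IsStaircase p f) {j : ℕ} (hj : j ≤ p.1) :
    ∃ i, j ∈ Set.Icc (f i).1 (f i).2 := by
  have of_fst_le : ∀ i, (f i).1 ≤ j → ∃ i', j ∈ Set.Icc (f i').1 (f i').2 := by
    intro i
    induction i using Fin.induction with
    | zero => exact fun hle => ⟨0, hle, hj.trans (mem_rowsBelow.1 hf.zero_mem).2.1⟩
    | succ i ih =>
      intro hle
      rcases le_or_gt (f i.castSucc).1 j with hle_prev | hlt_prev
      · exact ih hle_prev
      · exact ⟨i.succ, hle, hlt_prev.le.trans (mem_rowsBelow.1 (hf.succ_mem i)).2.1⟩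
  exact of_fst_le (Fin.last k) (hf.fst_last.trans_le (Nat.zero_le j))

end IsStaircase

/-- The subset of `α × Fin n` whose row over `i` is the segment of columns from `(f i).1` to
`(f i).2`. -/
def region {α : Type*} (n : ℕ) (f : α → ℕ × ℕ) : Set (α × Fin n) :=
  {x | (x.2 : ℕ) ∈ Set.Icc (f x.1).1 (f x.1).2}

theorem endpoints_le_of_region_subset {α : Type*} {n : ℕ} {f g : α → ℕ × ℕ} {i : α}
    (hf : (f i).1 ≤ (f i).2) (hn : (f i).2 < n) (hfg : region n f ⊆ region n g) :
    (g i).1 ≤ (f i).1 ∧ (f i).2 ≤ (g i).2 := by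
  have left_mem : (i, ⟨(f i).1, hf.trans_lt hn⟩) ∈ region n g := hfg ⟨le_rfl, hf⟩
  have right_mem : (i, ⟨(f i).2, hn⟩) ∈ region n g := hfg ⟨hf, le_rfl⟩
  exact ⟨left_mem.1, right_mem.2⟩

theorem region_injOn (α : Type*) (n : ℕ) :
    Set.InjOn (region n) {f : α → ℕ × ℕ | ∀ i, (f i).1 ≤ (f i).2 ∧ (f i).2 < n} := by
  intro f hf g hg hfg
  funext i
  have hle := endpoints_le_of_region_subset (hf i).1 (hf i).2 hfg.subset
  have hge := endpoints_le_of_region_subset (hg i).1 (hg i).2 hfg.symm.subset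
  exact Prod.ext (hge.1.antisymm hle.1) (hle.2.antisymm hge.2)

theorem isConvexSet_region {α : Type} [PartialOrder α] (n : ℕ) {f : α → ℕ × ℕ}
    (hl : Antitone fun i => (f i).1) (hr : Antitone fun i => (f i).2) :
    IsConvexSet (region n f) :=
  fun _ _ _ ha hc hab hbc =>
    ⟨(hl hab.1).trans (ha.1.trans hab.2), (Fin.val_le_of_le hbc.2).trans (hc.2.trans (hr hbc.1))⟩

namespace IsStaircase

variable {k m : ℕ} {p : ℕ × ℕ} {f : Fin (k + 1) → ℕ × ℕ}

theorem isConnectedSet_region {n : ℕ} (hf : IsStaircase p f) (hn : p.2 < n) :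
    IsConnectedSet (region n f) := by
  have comparable_in_row {i : Fin (k + 1)} {j j' : Fin n} (hj : (i, j) ∈ region n f)
      (hj' : (i, j') ∈ region n f) : ComparableIn (region n f) (i, j) (i, j') :=
    ⟨hj, hj', (le_total j j').imp (fun h => ⟨le_rfl, h⟩) fun h => ⟨le_rfl, h⟩⟩
  let leftEnd (i : Fin (k + 1)) : Fin n :=
    ⟨(f i).1, (hf.fst_le_snd i).trans_lt ((hf.snd_le i).trans_lt hn)⟩
  have leftEnd_mem (i : Fin (k + 1)) : (i, leftEnd i) ∈ region n f := ⟨le_rfl, hf.fst_le_snd i⟩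
  refine isConnectedSet_of_forall_reflTransGen (0, leftEnd 0) ?_
  rintro ⟨i, j⟩ hij
  induction i using Fin.induction generalizing j with
  | zero => exact .single (comparable_in_row hij (leftEnd_mem 0))
  | succ i ih =>
    have hstep := mem_rowsBelow.1 (hf.succ_mem i)
    have below_mem : (i.succ, leftEnd i.castSucc) ∈ region n f := ⟨hstep.1, hstep.2.1⟩
    have down : ComparableIn (region n f) (i.succ, leftEnd i.castSucc)
        (i.castSucc, leftEnd i.castSucc) :=
      ⟨below_mem, leftEnd_mem _, .inr ⟨Fin.castSucc_le_succ i, le_rfl⟩⟩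
    exact .head (comparable_in_row hij below_mem) (.head down (ih _ (leftEnd_mem _)))

theorem isFullInterval_region (hf : IsStaircase (m, m) f) : IsFullInterval (region (m + 1) f) := by
  have rows_nonempty (i : Fin (k + 1)) : ∃ j, (i, j) ∈ region (m + 1) f :=
    ⟨⟨(f i).2, Nat.lt_succ_of_le (hf.snd_le i)⟩, hf.fst_le_snd i, le_rfl⟩
  obtain ⟨j, hj⟩ := rows_nonempty 0
  exact ⟨⟨⟨(0, j), hj⟩, isConvexSet_region _ hf.antitone_fst hf.antitone_snd,
      hf.isConnectedSet_region (Nat.lt_succ_self m)⟩,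
    rows_nonempty, fun j => hf.exists_mem_Icc j.is_le⟩

end IsStaircase

theorem castSucc_covBy_succ {k : ℕ} (i : Fin k) : i.castSucc ⋖ i.succ :=
  Fin.covBy_iff.2 (Nat.covBy_iff_add_one_eq.2 rfl)

theorem IsFullInterval.exists_isStaircase {k m : ℕ} {I : Set (Fin (k + 1) × Fin (m + 1))}
    (hI : IsFullInterval I) :
    ∃ f : Fin (k + 1) → ℕ × ℕ, IsStaircase (m, m) f ∧ region (m + 1) f = I := by
  obtain ⟨⟨-, hconv, hconn⟩, hrows, hcols⟩ := hI
  have exists_isLeast (i) : ∃ j, IsLeast {j | (i, j) ∈ I} j :=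
    Set.exists_min_image _ id (Set.toFinite _) (hrows i)
  have exists_isGreatest (i) : ∃ j, IsGreatest {j | (i, j) ∈ I} j :=
    Set.exists_max_image _ id (Set.toFinite _) (hrows i)
  choose l hl using exists_isLeast
  choose r hr using exists_isGreatest
  have l_antitone := hconv.antitone_of_isLeast hl
  have r_antitone := hconv.antitone_of_isGreatest hr
  have r_zero : Fin.last m ≤ r 0 := by
    obtain ⟨i, hi⟩ := hcols (Fin.last m)
    exact ((hr i).2 hi).trans (r_antitone (Fin.zero_le i))
  have l_last : l (Fin.last k) ≤ 0 := by
    obtain ⟨i, hi⟩ := hcols 0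
    exact (l_antitone (Fin.le_last i)).trans ((hl i).2 hi)
  refine ⟨fun i => (l i, r i), ⟨?_, fun i => ?_, Nat.le_zero.1 l_last⟩, ?_⟩
  · exact mem_rowsBelow.2 ⟨(l 0).is_le, r_zero, (r 0).is_le⟩
  · exact mem_rowsBelow.2 ⟨l_antitone (Fin.castSucc_le_succ i),
      hconn.isLeast_le_isGreatest_of_covBy hconv hl hr (castSucc_covBy_succ i),
      r_antitone (Fin.castSucc_le_succ i)⟩
  · ext x
    exact (hconv.mem_iff_mem_Icc hl hr).symm

theorem setOf_isFullInterval_eq_image_region (k m : ℕ) :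
    {I : Set (Fin (k + 1) × Fin (m + 1)) | IsFullInterval I} =
      region (m + 1) '' staircases (k + 1) (m, m) := by
  ext I
  constructor
  · intro hI
    obtain ⟨f, hf, rfl⟩ := hI.exists_isStaircase
    exact ⟨f, mem_staircases.2 hf, rfl⟩
  · rintro ⟨f, hf, rfl⟩
    exact (mem_staircases.1 hf).isFullInterval_region

theorem region_injOn_staircases (k m : ℕ) :
    Set.InjOn (region (m + 1)) (staircases (k + 1) (m, m) : Set (Fin (k + 1) → ℕ × ℕ)) := by
  refine (region_injOn _ (m + 1)).mono ?_
  intro f hf i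
  have hf : IsStaircase (m, m) f := mem_staircases.1 hf
  exact ⟨hf.fst_le_snd i, Nat.lt_succ_of_le (hf.snd_le i)⟩

/-- The number of intervals of `Fin h × Fin w` whose two
coordinate projections are both surjective equals the Narayana number
`N(h+w-1, h) = C(h+w-1, h-1) * C(h+w-1, w-1) / (h+w-1)`. -/
theorem card_full_intervals_eq_narayana (h w : ℕ) (hh : 0 < h) (hw : 0 < w) :
    {I : Set (Fin h × Fin w) | IsIntervalSet I ∧
        (∀ i : Fin h, ∃ j : Fin w, (i, j) ∈ I) ∧
        (∀ j : Fin w, ∃ i : Fin h, (i, j) ∈ I)}.ncard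
      = Nat.choose (h + w - 1) (h - 1) * Nat.choose (h + w - 1) (w - 1)
          / (h + w - 1) := by
  obtain ⟨k, rfl⟩ := Nat.exists_eq_add_one.2 hh
  obtain ⟨m, rfl⟩ := Nat.exists_eq_add_one.2 hw
  change {I : Set (Fin (k + 1) × Fin (m + 1)) | IsFullInterval I}.ncard = _
  rw [setOf_isFullInterval_eq_image_region, (region_injOn_staircases k m).ncard_image,
    Set.ncard_coe_finset, card_staircases_self, show k + 1 + (m + 1) - 1 = k + m + 1 by omega,
    Nat.add_sub_cancel, Nat.add_sub_cancel]
end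

section
/- Let m, n be positive integers. The total number of intervals of the product poset Fin m × Fin n equals Σ_{h=1}^{m} Σ_{w=1}^{n} (m−h+1)(n−w+1)/(h+w−1) · C(h+w−1, h−1) · C(h+w−1, w−1). -/
open Classical

variable {P : Type} [PartialOrder P]

/-!
A finite interval of `ℕ × ℕ` is a staircase. Convexity makes each row a range of columns,
connectedness makes consecutive rows share a column, and the two together force both ends of the
rows to move weakly to the left as the row index grows. Deleting row `0` gives a recursion for the
number of staircases with a given row `0` and leftmost column `0`; its solution is a `2 × 2`
determinant of multichoose numbers, and summing over the left end of row `0` gives the Narayana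
number as the number of staircases with a given bounding box. A staircase with `h + 1` rows and
`w + 1` columns fits into the `m × n` grid in `(m - h) * (n - w)` positions.
-/

section Poset

theorem isConvexSet_iff_ordConnected {I : Set P} : IsConvexSet I ↔ I.OrdConnected :=
  ⟨fun hI => ⟨fun _ ha _ hc _ hb => hI ha hc hb.1 hb.2⟩,
    fun hI _ _ _ ha hc hab hbc => hI.out ha hc ⟨hab, hbc⟩⟩

theorem isConnectedSet_iff_exists_comparable {I : Set P} :
    IsConnectedSet I ↔ ∀ s : Set P, (I ∩ s).Nonempty → (I \ s).Nonempty →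
      ∃ u ∈ I ∩ s, ∃ v ∈ I \ s, u ≤ v ∨ v ≤ u := by
  constructor
  · rintro hI s ⟨a, ha, has⟩ ⟨b, hb, hbs⟩
    by_contra! hcross
    have reach_mem : ∀ c, Relation.ReflTransGen
        (fun u v : P => u ∈ I ∧ v ∈ I ∧ (u ≤ v ∨ v ≤ u)) a c → c ∈ s := by
      intro c hc
      induction hc with
      | refl => exact has
      | tail _ huv hus =>
        obtain ⟨hu, hv, huv⟩ := huv
        by_contra hvs
        exact huv.elim (hcross _ ⟨hu, hus⟩ _ ⟨hv, hvs⟩).1 (hcross _ ⟨hu, hus⟩ _ ⟨hv, hvs⟩).2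
    exact hbs (reach_mem b (hI a ha b hb))
  · intro hI a ha b hb
    by_contra hab
    obtain ⟨u, ⟨hu, hau⟩, v, ⟨hv, hav⟩, huv⟩ :=
      hI {c | Relation.ReflTransGen (fun u v : P => u ∈ I ∧ v ∈ I ∧ (u ≤ v ∨ v ≤ u)) a c}
        ⟨a, ha, .refl⟩ ⟨b, hb, hab⟩
    exact hav (hau.tail ⟨hu, hv, huv⟩)

theorem IsConnectedSet.of_isChain {I : Set P} (hI : IsChain (· ≤ ·) I) : IsConnectedSet I :=
  fun _ ha _ hb => .single ⟨ha, hb, hI.total ha hb⟩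

theorem IsConnectedSet.union {I J : Set P} (hI : IsConnectedSet I) (hJ : IsConnectedSet J)
    {u v : P} (hu : u ∈ I) (hv : v ∈ J) (huv : u ≤ v ∨ v ≤ u) : IsConnectedSet (I ∪ J) := by
  have reach {K : Set P} (hK : IsConnectedSet K) (hsub : K ⊆ I ∪ J) {a b : P} (ha : a ∈ K)
      (hb : b ∈ K) : Relation.ReflTransGen
        (fun x y : P => x ∈ I ∪ J ∧ y ∈ I ∪ J ∧ (x ≤ y ∨ y ≤ x)) a b :=
    Relation.ReflTransGen.mono (fun _ _ h => ⟨hsub h.1, hsub h.2.1, h.2.2⟩) _ _ (hK a ha b hb)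
  have reachI {a b : P} := reach (a := a) (b := b) hI Set.subset_union_left
  have reachJ {a b : P} := reach (a := a) (b := b) hJ Set.subset_union_right
  rintro a (ha | ha) b (hb | hb)
  · exact reachI ha hb
  · exact ((reachI ha hu).tail ⟨.inl hu, .inr hv, huv⟩).trans (reachJ hv hb)
  · exact ((reachJ ha hv).tail ⟨.inr hv, .inl hu, huv.symm⟩).trans (reachI hu hb)
  · exact reachJ ha hb

variable {Q : Type} [PartialOrder Q]

theorem isConvexSet_image_iff (e : P ↪o Q) (he : (Set.range e).OrdConnected) {I : Set P} :
    IsConvexSet (e '' I) ↔ IsConvexSet I := by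
  constructor
  · intro hI a b c ha hc hab hbc
    exact e.injective.mem_set_image.1 <|
      hI (Set.mem_image_of_mem e ha) (Set.mem_image_of_mem e hc) (e.monotone hab) (e.monotone hbc)
  · rintro hI _ y _ ⟨a, ha, rfl⟩ ⟨c, hc, rfl⟩ hay hyc
    obtain ⟨b, rfl⟩ := he.out ⟨a, rfl⟩ ⟨c, rfl⟩ ⟨hay, hyc⟩
    exact Set.mem_image_of_mem e (hI ha hc (e.le_iff_le.1 hay) (e.le_iff_le.1 hyc))

theorem isConnectedSet_image_iff (e : P ↪o Q) {I : Set P} :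
    IsConnectedSet (e '' I) ↔ IsConnectedSet I := by
  simp only [isConnectedSet_iff_exists_comparable]
  constructor
  · intro hI s hs hs'
    specialize hI (e '' s)
    rw [← Set.image_inter e.injective, ← Set.image_sdiff e.injective] at hI
    obtain ⟨_, ⟨u, hu, rfl⟩, _, ⟨v, hv, rfl⟩, huv⟩ := hI (hs.image e) (hs'.image e)
    exact ⟨u, hu, v, hv, by simpa only [e.le_iff_le] using huv⟩
  · intro hI s hs hs'
    rw [← Set.image_inter_preimage] at hs ⊢
    rw [← Set.image_sdiff_preimage] at hs' ⊢
    obtain ⟨u, hu, v, hv, huv⟩ := hI (e ⁻¹' s) hs.of_image hs'.of_image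
    exact ⟨e u, ⟨u, hu, rfl⟩, e v, ⟨v, hv, rfl⟩, by simpa only [e.le_iff_le] using huv⟩

theorem isIntervalSet_image_iff (e : P ↪o Q) (he : (Set.range e).OrdConnected) {I : Set P} :
    IsIntervalSet (e '' I) ↔ IsIntervalSet I := by
  rw [IsIntervalSet, IsIntervalSet, Set.image_nonempty, isConvexSet_image_iff e he,
    isConnectedSet_image_iff]

theorem ncard_isIntervalSet_eq_of_orderEmbedding (e : P ↪o Q)
    (he : (Set.range e).OrdConnected) :
    {I : Set P | IsIntervalSet I}.ncard =
      {J : Set Q | IsIntervalSet J ∧ J ⊆ Set.range e}.ncard := by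
  refine Set.BijOn.ncard_eq (f := fun I => e '' I) ⟨?_, e.injective.image_injective.injOn, ?_⟩
  · exact fun I hI => ⟨(isIntervalSet_image_iff e he).2 hI, Set.image_subset_range e I⟩
  · rintro J ⟨hJ, hJe⟩
    obtain ⟨I, rfl⟩ := Set.subset_range_iff_exists_image_eq.1 hJe
    exact ⟨I, (isIntervalSet_image_iff e he).1 hJ, rfl⟩

theorem ordConnected_eq_Icc_of_finite {α : Type*} [ConditionallyCompleteLinearOrder α]
    {s : Set α} (hs : s.OrdConnected) (hfin : s.Finite) (hne : s.Nonempty) :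
    s = Set.Icc (sInf s) (sSup s) :=
  Set.Subset.antisymm (fun _ hx => ⟨csInf_le hfin.bddBelow hx, le_csSup hfin.bddAbove hx⟩)
    (hs.out (hne.csInf_mem hfin) (hne.csSup_mem hfin))

end Poset

section Rows

variable {α β : Type} [LinearOrder α] [PartialOrder β] {I : Set (α × β)} {J : Set (ℕ × ℕ)}

theorem IsIntervalSet.exists_mem_mem_of_covBy (hI : IsIntervalSet I) {p q : α × β}
    (hp : p ∈ I) (hq : q ∈ I) {i i' : α} (hii' : i ⋖ i') (hpi : p.1 ≤ i) (hiq : i' ≤ q.1) :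
    ∃ j, (i, j) ∈ I ∧ (i', j) ∈ I := by
  obtain ⟨u, ⟨hu, hui⟩, v, ⟨hv, hvi⟩, huv⟩ :=
    isConnectedSet_iff_exists_comparable.1 hI.2.2 {x | x.1 ≤ i}
      ⟨p, hp, hpi⟩ ⟨q, hq, (hii'.lt.trans_le hiq).not_ge⟩
  have hi'v : i' ≤ v.1 := hii'.ge_of_gt (not_le.1 hvi)
  have huv : u ≤ v := huv.resolve_right fun hvu => hvi (hvu.1.trans hui)
  exact ⟨u.2, hI.2.1 hu hv ⟨hui, le_rfl⟩ ⟨hii'.le.trans hi'v, huv.2⟩,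
    hI.2.1 hu hv ⟨le_trans hui hii'.le, le_rfl⟩ ⟨hi'v, huv.2⟩⟩

theorem IsIntervalSet.ordConnected_image_fst [SuccOrder α] (hI : IsIntervalSet I) :
    (Prod.fst '' I).OrdConnected := by
  refine ⟨?_⟩
  rintro _ ⟨p, hp, rfl⟩ _ ⟨q, hq, rfl⟩ i ⟨hpi, hiq⟩
  obtain rfl | hiq := hiq.eq_or_lt
  · exact ⟨q, hq, rfl⟩
  · obtain ⟨j, hj, -⟩ := hI.exists_mem_mem_of_covBy hp hq
      (Order.covBy_succ_of_not_isMax hiq.not_isMax) hpi (Order.succ_le_of_lt hiq)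
    exact ⟨(i, j), hj, rfl⟩

/-- The first and the last column met by `J` in row `i`. Both are `0` if the row is empty. -/
noncomputable def rowEnds (J : Set (ℕ × ℕ)) (i : ℕ) : ℕ × ℕ :=
  (sInf (Prod.mk i ⁻¹' J), sSup (Prod.mk i ⁻¹' J))

theorem IsConvexSet.mem_iff_mem_Icc_rowEnds (hJ : IsConvexSet J) (hfin : J.Finite) {i : ℕ}
    (hi : i ∈ Prod.fst '' J) (j : ℕ) :
    (i, j) ∈ J ↔ j ∈ Set.Icc (rowEnds J i).1 (rowEnds J i).2 := by
  obtain ⟨p, hp, rfl⟩ := hi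
  have row_ordConnected : (Prod.mk p.1 ⁻¹' J).OrdConnected :=
    (isConvexSet_iff_ordConnected.1 hJ).preimage_mono fun _ _ h => ⟨le_rfl, h⟩
  exact Set.ext_iff.1 (ordConnected_eq_Icc_of_finite row_ordConnected
    (hfin.preimage (Prod.mk_right_injective p.1).injOn) ⟨p.2, hp⟩) j

theorem IsConvexSet.rowEnds_fst_le_snd (hJ : IsConvexSet J) (hfin : J.Finite) {i : ℕ}
    (hi : i ∈ Prod.fst '' J) : (rowEnds J i).1 ≤ (rowEnds J i).2 := by
  have hmem := hJ.mem_iff_mem_Icc_rowEnds hfin hi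
  obtain ⟨p, hp, rfl⟩ := hi
  exact Set.nonempty_Icc.1 ⟨p.2, (hmem p.2).1 hp⟩

theorem IsIntervalSet.rowEnds_succ (hJ : IsIntervalSet J) (hfin : J.Finite) {i : ℕ}
    (hi : i ∈ Prod.fst '' J) (hi' : i + 1 ∈ Prod.fst '' J) :
    rowEnds J (i + 1) ≤ rowEnds J i ∧ (rowEnds J i).1 ≤ (rowEnds J (i + 1)).2 := by
  have mem_row := hJ.2.1.mem_iff_mem_Icc_rowEnds hfin hi
  have mem_row' := hJ.2.1.mem_iff_mem_Icc_rowEnds hfin hi'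
  have left_mem := (mem_row _).2 ⟨le_rfl, hJ.2.1.rowEnds_fst_le_snd hfin hi⟩
  have right_mem := (mem_row' _).2 ⟨hJ.2.1.rowEnds_fst_le_snd hfin hi', le_rfl⟩
  obtain ⟨j, hj, hj'⟩ := hJ.exists_mem_mem_of_covBy left_mem right_mem (Order.covBy_add_one i)
    le_rfl le_rfl
  have left_mem' : (i + 1, (rowEnds J i).1) ∈ J :=
    hJ.2.1 left_mem hj' ⟨i.le_succ, le_rfl⟩ ⟨le_rfl, ((mem_row j).1 hj).1⟩
  have right_mem' : (i, (rowEnds J (i + 1)).2) ∈ J :=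
    hJ.2.1 hj right_mem ⟨le_rfl, ((mem_row' j).1 hj').2⟩ ⟨i.le_succ, le_rfl⟩
  exact ⟨⟨((mem_row' _).1 left_mem').1, ((mem_row _).1 right_mem').2⟩,
    ((mem_row' _).1 left_mem').2⟩

end Rows

section Staircases

variable {h h' : ℕ}

/-- A staircase with rows `0, …, h`: row `k` occupies the nonempty column range
`[(f k).1, (f k).2]`, both ends move weakly to the left from one row to the next, and consecutive
rows share a column. -/
structure IsStaircase_s8 (f : Fin (h + 1) → ℕ × ℕ) : Prop where
  fst_le_snd : ∀ k, (f k).1 ≤ (f k).2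
  antitone : Antitone f
  overlap : ∀ k : Fin h, (f k.castSucc).1 ≤ (f k.succ).2

theorem isStaircase_cons_s8 {p : ℕ × ℕ} {g : Fin (h + 1) → ℕ × ℕ} :
    IsStaircase_s8 (Fin.cons p g : Fin (h + 2) → ℕ × ℕ) ↔
      IsStaircase_s8 g ∧ g 0 ≤ p ∧ p.1 ≤ (g 0).2 := by
  constructor
  · rintro ⟨hle, hanti, hover⟩
    rw [Fin.antitone_iff_succ_le, Fin.forall_fin_succ] at hanti
    rw [Fin.forall_fin_succ] at hle hover
    exact ⟨⟨hle.2, Fin.antitone_iff_succ_le.2 hanti.2, hover.2⟩, hanti.1, hover.1⟩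
  · rintro ⟨⟨hle, hanti, hover⟩, hp, hp'⟩
    refine ⟨Fin.forall_fin_succ.2 ⟨hp'.trans hp.2, hle⟩, ?_, Fin.forall_fin_succ.2 ⟨hp', hover⟩⟩
    exact Fin.antitone_iff_succ_le.2
      (Fin.forall_fin_succ.2 ⟨hp, Fin.antitone_iff_succ_le.1 hanti⟩)

/-- The cells of the staircase `f` when its row `0` is put in row `a` of the grid. -/
def cells (a : ℕ) (f : Fin (h + 1) → ℕ × ℕ) : Set (ℕ × ℕ) :=
  {p | ∃ k : Fin (h + 1), p.1 = a + k ∧ p.2 ∈ Set.Icc (f k).1 (f k).2}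

theorem mk_add_mem_cells {a : ℕ} {f : Fin (h + 1) → ℕ × ℕ} {k : Fin (h + 1)} {j : ℕ} :
    (a + (k : ℕ), j) ∈ cells a f ↔ j ∈ Set.Icc (f k).1 (f k).2 := by
  refine ⟨?_, fun hj => ⟨k, rfl, hj⟩⟩
  rintro ⟨k', hk', hj⟩
  rwa [Fin.ext (Nat.add_left_cancel hk')]

theorem cells_cons (a : ℕ) (p : ℕ × ℕ) (g : Fin (h + 1) → ℕ × ℕ) :
    cells a (Fin.cons p g : Fin (h + 2) → ℕ × ℕ) =
      {a} ×ˢ Set.Icc p.1 p.2 ∪ cells (a + 1) g := by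
  ext q
  simp only [cells, Set.mem_ofPred_eq, Set.mem_union, Set.mem_prod, Set.mem_singleton_iff]
  rw [Fin.exists_fin_succ]
  simp only [Fin.cons_zero, Fin.cons_succ, Fin.val_zero, Fin.val_succ, add_zero, add_assoc,
    add_comm 1]

theorem isChain_singleton_prod {α β : Type*} [Preorder α] [LinearOrder β] (a : α) (s : Set β) :
    IsChain (· ≤ ·) ({a} ×ˢ s) := by
  rintro ⟨_, j⟩ ⟨rfl, -⟩ ⟨_, j'⟩ ⟨rfl, -⟩ -
  exact (le_total j j').imp (⟨le_rfl, ·⟩) (⟨le_rfl, ·⟩)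

theorem isConnectedSet_cells {f : Fin (h + 1) → ℕ × ℕ} (hf : IsStaircase_s8 f) (a : ℕ) :
    IsConnectedSet (cells a f) := by
  induction h generalizing a with
  | zero =>
    have cells_eq : cells a f = {a} ×ˢ Set.Icc (f 0).1 (f 0).2 := by
      ext q
      simp [cells]
    exact cells_eq ▸ .of_isChain (isChain_singleton_prod _ _)
  | succ h ih =>
    obtain ⟨p, g, rfl⟩ : ∃ (p : ℕ × ℕ) (g : Fin (h + 1) → ℕ × ℕ), f = Fin.cons p g :=
      ⟨f 0, Fin.tail f, (Fin.cons_self_tail f).symm⟩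
    obtain ⟨hg, hgp, hpg⟩ := isStaircase_cons_s8.1 hf
    rw [cells_cons]
    have top_mem : (a, p.1) ∈ ({a} : Set ℕ) ×ˢ Set.Icc p.1 p.2 :=
      ⟨rfl, le_rfl, hpg.trans hgp.2⟩
    have below_mem : (a + 1, p.1) ∈ cells (a + 1) g := ⟨0, rfl, hgp.1, hpg⟩
    exact (IsConnectedSet.of_isChain (isChain_singleton_prod _ _)).union (ih hg (a + 1))
      top_mem below_mem (.inl ⟨a.le_succ, le_rfl⟩)

theorem isConvexSet_cells {f : Fin (h + 1) → ℕ × ℕ} (hf : Antitone f) (a : ℕ) :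
    IsConvexSet (cells a f) := by
  rintro x y z ⟨k, hk, hxl, -⟩ ⟨k', hk', -, hzr⟩ hxy hyz
  have hky : a + k ≤ y.1 := hk ▸ hxy.1
  have hyk' : y.1 ≤ a + k' := hk' ▸ hyz.1
  obtain ⟨i, hi⟩ := Nat.exists_eq_add_of_le (le_of_add_le_left hky)
  have hki : (k : ℕ) ≤ i := by omega
  have hik' : i ≤ k' := by omega
  refine ⟨⟨i, hik'.trans_lt k'.2⟩, hi, ?_, ?_⟩
  · exact ((hf hki).1.trans hxl).trans hxy.2
  · exact (hyz.2.trans hzr).trans (hf (show ⟨i, _⟩ ≤ k' from hik')).2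

theorem isIntervalSet_cells {f : Fin (h + 1) → ℕ × ℕ} (hf : IsStaircase_s8 f) (a : ℕ) :
    IsIntervalSet (cells a f) :=
  ⟨⟨(a, (f 0).1), 0, rfl, le_rfl, hf.fst_le_snd 0⟩, isConvexSet_cells hf.antitone a,
    isConnectedSet_cells hf a⟩

theorem image_fst_cells {f : Fin (h + 1) → ℕ × ℕ} (hf : ∀ k, (f k).1 ≤ (f k).2) (a : ℕ) :
    Prod.fst '' cells a f = Set.Icc a (a + h) := by
  ext i
  constructor
  · rintro ⟨p, ⟨k, hk, -⟩, rfl⟩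
    rw [Set.mem_Icc]
    omega
  · rintro ⟨hai, hih⟩
    obtain ⟨k, rfl⟩ := Nat.exists_eq_add_of_le hai
    let k' : Fin (h + 1) := ⟨k, by omega⟩
    exact ⟨(a + k, (f k').1), ⟨k', rfl, le_rfl, hf k'⟩, rfl⟩

theorem eq_of_cells_eq {a : ℕ} {f f' : Fin (h + 1) → ℕ × ℕ} (hf : ∀ k, (f k).1 ≤ (f k).2)
    (hcells : cells a f = cells a f') : f = f' := by
  funext k
  have row_eq : Set.Icc (f k).1 (f k).2 = Set.Icc (f' k).1 (f' k).2 := by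
    ext j
    rw [← mk_add_mem_cells (a := a), hcells, mk_add_mem_cells]
  exact Prod.ext_iff.2 ((Set.Icc_eq_Icc_iff (hf k)).1 row_eq)

theorem top_eq_and_height_eq_of_cells_eq {a a' : ℕ} {f : Fin (h + 1) → ℕ × ℕ}
    {f' : Fin (h' + 1) → ℕ × ℕ} (hf : ∀ k, (f k).1 ≤ (f k).2) (hf' : ∀ k, (f' k).1 ≤ (f' k).2)
    (hcells : cells a f = cells a' f') : a = a' ∧ h = h' := by
  have rows_eq : Set.Icc a (a + h) = Set.Icc a' (a' + h') := by
    rw [← image_fst_cells hf, hcells, image_fst_cells hf']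
  rw [Set.Icc_eq_Icc_iff (Nat.le_add_right a h)] at rows_eq
  omega

theorem cells_subset_Iio_prod_Iio_iff {f : Fin (h + 1) → ℕ × ℕ} (hf : IsStaircase_s8 f)
    {a m n : ℕ} : cells a f ⊆ Set.Iio m ×ˢ Set.Iio n ↔ a + h < m ∧ (f 0).2 < n := by
  constructor
  · intro hsub
    have last_mem : (a + h, (f (Fin.last h)).1) ∈ cells a f :=
      ⟨Fin.last h, rfl, le_rfl, hf.fst_le_snd _⟩
    have top_mem : (a, (f 0).2) ∈ cells a f := ⟨0, rfl, hf.fst_le_snd _, le_rfl⟩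
    exact ⟨(hsub last_mem).1, (hsub top_mem).2⟩
  · rintro ⟨ham, hn⟩ p ⟨k, hk, -, hpr⟩
    exact ⟨by rw [Set.mem_Iio]; omega, (hpr.trans (hf.antitone (Fin.zero_le k)).2).trans_lt hn⟩

theorem IsIntervalSet.exists_isStaircase_cells_eq {J : Set (ℕ × ℕ)} (hJ : IsIntervalSet J)
    (hfin : J.Finite) :
    ∃ (a h : ℕ) (f : Fin (h + 1) → ℕ × ℕ), IsStaircase_s8 f ∧ cells a f = J := by
  obtain ⟨a, h, hrows⟩ : ∃ a h, Prod.fst '' J = Set.Icc a (a + h) := by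
    have rows_eq := ordConnected_eq_Icc_of_finite hJ.ordConnected_image_fst
      (hfin.image Prod.fst) (hJ.1.image Prod.fst)
    have hle := Set.nonempty_Icc.1 (rows_eq ▸ hJ.1.image Prod.fst)
    exact ⟨_, _, by rwa [Nat.add_sub_cancel' hle]⟩
  have row_mem (k : ℕ) (hk : k ≤ h) : a + k ∈ Prod.fst '' J := hrows ▸ ⟨by omega, by omega⟩
  have step (k : Fin h) := hJ.rowEnds_succ hfin (row_mem k k.2.le) (row_mem (k + 1) k.2)
  refine ⟨a, h, fun k => rowEnds J (a + k), ⟨?_, ?_, ?_⟩, ?_⟩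
  · exact fun k => hJ.2.1.rowEnds_fst_le_snd hfin (row_mem k k.is_le)
  · exact Fin.antitone_iff_succ_le.2 fun k => (step k).1
  · exact fun k => (step k).2
  · ext ⟨i, j⟩
    constructor
    · rintro ⟨k, rfl, hj⟩
      exact (hJ.2.1.mem_iff_mem_Icc_rowEnds hfin (row_mem k k.is_le) j).2 hj
    · intro hij
      have hi : i ∈ Prod.fst '' J := ⟨(i, j), hij, rfl⟩
      obtain ⟨hai, hih⟩ := hrows ▸ hi
      obtain ⟨k, rfl⟩ := Nat.exists_eq_add_of_le hai
      exact ⟨⟨k, by omega⟩, rfl, (hJ.2.1.mem_iff_mem_Icc_rowEnds hfin hi j).1 hij⟩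

end Staircases

section Counting

variable {h : ℕ}

/-- The staircase `g` moved `b` columns to the right. -/
def shiftColumns (b : ℕ) (g : Fin (h + 1) → ℕ × ℕ) : Fin (h + 1) → ℕ × ℕ :=
  fun k => g k + (b, b)

theorem isStaircase_shiftColumns_iff {b : ℕ} {g : Fin (h + 1) → ℕ × ℕ} :
    IsStaircase_s8 (shiftColumns b g) ↔ IsStaircase_s8 g := by
  have antitone_iff : Antitone (shiftColumns b g) ↔ Antitone g := by
    simp only [Antitone, shiftColumns, add_le_add_iff_right]
  constructor
  · rintro ⟨hle, hanti, hover⟩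
    exact ⟨fun k => Nat.le_of_add_le_add_right (hle k), antitone_iff.1 hanti,
      fun k => Nat.le_of_add_le_add_right (hover k)⟩
  · rintro ⟨hle, hanti, hover⟩
    exact ⟨fun k => Nat.add_le_add_right (hle k) b, antitone_iff.2 hanti,
      fun k => Nat.add_le_add_right (hover k) b⟩

theorem IsStaircase_s8.exists_eq_shiftColumns {f : Fin (h + 1) → ℕ × ℕ} (hf : IsStaircase_s8 f) :
    ∃ (b : ℕ) (g : Fin (h + 1) → ℕ × ℕ),
      IsStaircase_s8 g ∧ (g (Fin.last h)).1 = 0 ∧ shiftColumns b g = f := by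
  let b := (f (Fin.last h)).1
  let g : Fin (h + 1) → ℕ × ℕ := fun k => ((f k).1 - b, (f k).2 - b)
  have hgf : shiftColumns b g = f := by
    funext k
    have hbl : b ≤ (f k).1 := (hf.antitone (Fin.le_last k)).1
    exact Prod.ext (Nat.sub_add_cancel hbl) (Nat.sub_add_cancel (hbl.trans (hf.fst_le_snd k)))
  exact ⟨b, g, isStaircase_shiftColumns_iff.1 (hgf ▸ hf), Nat.sub_self b, hgf⟩

theorem eq_of_shiftColumns_eq {b b' : ℕ} {g g' : Fin (h + 1) → ℕ × ℕ}
    (hg : (g (Fin.last h)).1 = (g' (Fin.last h)).1)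
    (hshift : shiftColumns b g = shiftColumns b' g') : b = b' ∧ g = g' := by
  have hb : b = b' := by
    have hlast : (g (Fin.last h)).1 + b = (g' (Fin.last h)).1 + b' :=
      congrArg Prod.fst (congrFun hshift (Fin.last h))
    omega
  subst hb
  exact ⟨rfl, funext fun k => add_right_cancel (congrFun hshift k)⟩

/-- The staircases with rows `0, …, h` whose row `0` is `p` and whose leftmost column is `0`,
built by prepending `p` to the admissible staircases with one row fewer. -/
noncomputable def anchoredStaircasesFrom : (h : ℕ) → ℕ × ℕ → Finset (Fin (h + 1) → ℕ × ℕ)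
  | 0, p => if p.1 = 0 then {fun _ => p} else ∅
  | h + 1, p => (Finset.range (p.1 + 1) ×ˢ Finset.Icc p.1 p.2).biUnion fun q =>
      (anchoredStaircasesFrom h q).image (Fin.cons p)

theorem mem_anchoredStaircasesFrom {p : ℕ × ℕ} (hp : p.1 ≤ p.2) {f : Fin (h + 1) → ℕ × ℕ} :
    f ∈ anchoredStaircasesFrom h p ↔ IsStaircase_s8 f ∧ f 0 = p ∧ (f (Fin.last h)).1 = 0 := by
  induction h generalizing p with
  | zero =>
    have isStaircase_const : IsStaircase_s8 (fun _ : Fin 1 => p) :=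
      ⟨fun _ => hp, antitone_const, fun k => k.elim0⟩
    obtain ⟨q, rfl⟩ : ∃ q, f = fun _ => q := ⟨f 0, funext fun k => by rw [Fin.fin_one_eq_zero k]⟩
    grind [anchoredStaircasesFrom]
  | succ h ih =>
    obtain ⟨q, g, rfl⟩ : ∃ (q : ℕ × ℕ) (g : Fin (h + 1) → ℕ × ℕ), f = Fin.cons q g :=
      ⟨f 0, Fin.tail f, (Fin.cons_self_tail f).symm⟩
    simp only [anchoredStaircasesFrom, Finset.mem_biUnion, Finset.mem_product, Finset.mem_range,
      Finset.mem_Icc, Finset.mem_image, Fin.cons_inj, isStaircase_cons_s8, Fin.cons_zero,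
      ← Fin.succ_last, Fin.cons_succ]
    constructor
    · rintro ⟨q', ⟨hl, hr, hr'⟩, g', hg', rfl, rfl⟩
      obtain ⟨hstair, rfl, hlast⟩ := (ih (by omega)).1 hg'
      exact ⟨⟨hstair, ⟨Nat.lt_succ_iff.1 hl, hr'⟩, hr⟩, rfl, hlast⟩
    · rintro ⟨⟨hstair, hle, hover⟩, rfl, hlast⟩
      exact ⟨g 0, ⟨Nat.lt_succ_iff.2 hle.1, hover, hle.2⟩, g,
        (ih (hstair.fst_le_snd 0)).2 ⟨hstair, rfl, hlast⟩, rfl, rfl⟩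

theorem pairwiseDisjoint_anchoredStaircasesFrom {s : Set (ℕ × ℕ)} (hs : ∀ p ∈ s, p.1 ≤ p.2) :
    s.PairwiseDisjoint (anchoredStaircasesFrom h) := by
  intro p hp q hq hpq
  refine Finset.disjoint_left.2 fun f hfp hfq => hpq ?_
  rw [← ((mem_anchoredStaircasesFrom (hs p hp)).1 hfp).2.1,
    ((mem_anchoredStaircasesFrom (hs q hq)).1 hfq).2.1]

theorem card_anchoredStaircasesFrom_succ (h : ℕ) (p : ℕ × ℕ) :
    (anchoredStaircasesFrom (h + 1) p).card =
      ∑ l ∈ Finset.range (p.1 + 1), ∑ r ∈ Finset.Icc p.1 p.2,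
        (anchoredStaircasesFrom h (l, r)).card := by
  have cons_injective := Fin.cons_right_injective (α := fun _ : Fin (h + 2) => ℕ × ℕ) p
  have fst_le_snd : ∀ q ∈ (↑(Finset.range (p.1 + 1) ×ˢ Finset.Icc p.1 p.2) : Set (ℕ × ℕ)),
      q.1 ≤ q.2 := by
    intro q hq
    rw [Finset.mem_coe, Finset.mem_product, Finset.mem_range, Finset.mem_Icc] at hq
    omega
  rw [anchoredStaircasesFrom, Finset.card_biUnion, Finset.sum_product]
  · simp only [Finset.card_image_of_injective _ cons_injective]
  · exact fun q hq q' hq' hqq' => (Finset.disjoint_image cons_injective).2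
      (pairwiseDisjoint_anchoredStaircasesFrom fst_le_snd hq hq' hqq')

theorem sum_range_multichoose_eq_multichoose (h l : ℕ) :
    ∑ i ∈ Finset.range (l + 1), h.multichoose i = (h + 1).multichoose l := by
  rw [Nat.sum_range_multichoose, Nat.multichoose_eq, Nat.choose_symm_add.symm]
  congr 1
  omega

theorem sum_Icc_multichoose_succ (h : ℕ) {l r : ℕ} (hlr : l ≤ r) :
    ∑ i ∈ Finset.Icc l r, (h.multichoose (i + 1) : ℤ) =
      (h + 1).multichoose (r + 1) - (h + 1).multichoose l := by
  have telescope (i : ℕ) : (h.multichoose (i + 1) : ℤ) =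
      (h + 1).multichoose (i + 1) - (h + 1).multichoose i := by
    rw [Nat.multichoose_succ_succ]
    push_cast
    ring
  induction r, hlr using Nat.le_induction with
  | base => rw [Finset.Icc_self, Finset.sum_singleton, telescope]
  | succ r hr ih =>
    rw [Finset.sum_Icc_succ_top (by omega), ih, telescope (r + 1)]
    ring

/-- The two boundaries of a staircase are nonintersecting lattice paths, and this is their
Lindström–Gessel–Viennot determinant. -/
theorem card_anchoredStaircasesFrom {l r : ℕ} (hlr : l ≤ r) :
    ((anchoredStaircasesFrom h (l, r)).card : ℤ) =
      h.multichoose l * (h + 1).multichoose (r + 1) -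
        (h + 1).multichoose l * h.multichoose (r + 1) := by
  induction h generalizing l r with
  | zero => cases l <;> simp [anchoredStaircasesFrom]
  | succ h ih =>
    have sum_range (s : ℕ) (h' : ℕ) : ∑ i ∈ Finset.range (s + 1), (h'.multichoose i : ℤ) =
        (h' + 1).multichoose s := mod_cast sum_range_multichoose_eq_multichoose h' s
    calc ((anchoredStaircasesFrom (h + 1) (l, r)).card : ℤ)
        = ∑ x ∈ Finset.range (l + 1), ∑ y ∈ Finset.Icc l r,
            ((h.multichoose x : ℤ) * (h + 1).multichoose (y + 1) -
              (h + 1).multichoose x * h.multichoose (y + 1)) := by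
          rw [card_anchoredStaircasesFrom_succ]
          push_cast
          refine Finset.sum_congr rfl fun x hx => Finset.sum_congr rfl fun y hy => ih ?_
          rw [Finset.mem_range] at hx
          rw [Finset.mem_Icc] at hy
          omega
      _ = (h + 1).multichoose l * ((h + 2).multichoose (r + 1) - (h + 2).multichoose l) -
            (h + 2).multichoose l * ((h + 1).multichoose (r + 1) - (h + 1).multichoose l) := by
          simp only [Finset.sum_sub_distrib, ← Finset.mul_sum, ← Finset.sum_mul, sum_range,
            sum_Icc_multichoose_succ _ hlr]
      _ = _ := by ring

/-- The staircases with bounding box rows `0, …, h` and columns `0, …, w`. -/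
noncomputable def anchoredStaircases (h w : ℕ) : Finset (Fin (h + 1) → ℕ × ℕ) :=
  (Finset.range (w + 1)).biUnion fun l => anchoredStaircasesFrom h (l, w)

theorem mem_anchoredStaircases {w : ℕ} {f : Fin (h + 1) → ℕ × ℕ} :
    f ∈ anchoredStaircases h w ↔ IsStaircase_s8 f ∧ (f 0).2 = w ∧ (f (Fin.last h)).1 = 0 := by
  simp only [anchoredStaircases, Finset.mem_biUnion, Finset.mem_range]
  constructor
  · rintro ⟨l, hl, hf⟩
    obtain ⟨hstair, htop, hlast⟩ := (mem_anchoredStaircasesFrom (Nat.lt_succ_iff.1 hl)).1 hf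
    exact ⟨hstair, by rw [htop], hlast⟩
  · rintro ⟨hstair, rfl, hlast⟩
    have hle := hstair.fst_le_snd 0
    exact ⟨(f 0).1, Nat.lt_succ_iff.2 hle,
      (mem_anchoredStaircasesFrom hle).2 ⟨hstair, rfl, hlast⟩⟩

theorem card_anchoredStaircases_eq_sub (h w : ℕ) :
    ((anchoredStaircases h w).card : ℤ) =
      (h + 1).multichoose w * (h + 1).multichoose (w + 1) -
        (h + 2).multichoose w * h.multichoose (w + 1) := by
  have disjoint : (↑(Finset.range (w + 1)) : Set ℕ).PairwiseDisjoint
      fun l => anchoredStaircasesFrom h (l, w) := by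
    intro l hl l' hl' hll'
    exact pairwiseDisjoint_anchoredStaircasesFrom (s := {p | p.1 ≤ p.2}) (fun _ hp => hp)
      (Nat.lt_succ_iff.1 (Finset.mem_range.1 hl)) (Nat.lt_succ_iff.1 (Finset.mem_range.1 hl'))
      fun hpair => hll' (congrArg Prod.fst hpair)
  rw [anchoredStaircases, Finset.card_biUnion disjoint]
  push_cast
  rw [Finset.sum_congr rfl fun l hl => card_anchoredStaircasesFrom
    (Nat.lt_succ_iff.1 (Finset.mem_range.1 hl))]
  simp only [Finset.sum_sub_distrib, ← Finset.sum_mul, ← Nat.cast_sum,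
    sum_range_multichoose_eq_multichoose]

theorem multichoose_det_mul (h w : ℕ) :
    ((h + 1).multichoose w * (h + 1).multichoose (w + 1) -
        (h + 2).multichoose w * h.multichoose (w + 1) : ℤ) * (h + w + 1) =
      (h + w + 1).choose h * (h + w + 1).choose w := by
  have absorb_w : (h + w + 1).choose w * (h + 1) = (h + w + 1) * (h + w).choose w := by
    rw [mul_comm (h + w + 1), Nat.choose_mul_succ_eq]
    congr 1
    omega
  have absorb_h : (h + w + 1).choose (w + 1) * h = (h + w + 1) * (h + w).choose (w + 1) := by
    rw [mul_comm (h + w + 1), Nat.choose_mul_succ_eq]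
    congr 1
    omega
  have symm : (h + w + 1).choose h = (h + w + 1).choose (w + 1) :=
    Nat.choose_symm_of_eq_add (by omega)
  simp only [Nat.multichoose_eq, symm, show h + 1 + w - 1 = h + w by omega,
    show h + 1 + (w + 1) - 1 = h + w + 1 by omega, show h + 2 + w - 1 = h + w + 1 by omega,
    show h + (w + 1) - 1 = h + w by omega]
  zify at absorb_w absorb_h
  linear_combination ((h + w + 1).choose w : ℤ) * absorb_h -
    ((h + w + 1).choose (w + 1) : ℤ) * absorb_w

theorem card_anchoredStaircases (h w : ℕ) :
    (anchoredStaircases h w).card =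
      (h + w + 1).choose h * (h + w + 1).choose w / (h + w + 1) := by
  refine (Nat.div_eq_of_eq_mul_left (Nat.succ_pos _) ?_).symm
  zify
  rw [card_anchoredStaircases_eq_sub, multichoose_det_mul]

end Counting

section Placements

/-- The ways to place a staircase in the `m × n` grid, indexed by its last row and column
`(h, w)`: the top left corner `(a, b)` of its bounding box, and its anchored shape. -/
noncomputable def placements (m n : ℕ) :
    Finset (Σ p : ℕ × ℕ, (ℕ × ℕ) × (Fin (p.1 + 1) → ℕ × ℕ)) :=
  (Finset.range m ×ˢ Finset.range n).sigma fun p =>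
    (Finset.range (m - p.1) ×ˢ Finset.range (n - p.2)) ×ˢ anchoredStaircases p.1 p.2

theorem card_placements (m n : ℕ) :
    (placements m n).card = ∑ h ∈ Finset.range m, ∑ w ∈ Finset.range n,
      (m - h) * (n - w) * ((h + w + 1).choose h * (h + w + 1).choose w / (h + w + 1)) := by
  simp only [placements, Finset.card_sigma, Finset.card_product, Finset.card_range,
    card_anchoredStaircases, Finset.sum_product]

theorem mem_placements {m n h w a b : ℕ} {g : Fin (h + 1) → ℕ × ℕ} :
    ⟨(h, w), (a, b), g⟩ ∈ placements m n ↔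
      a + h < m ∧ b + w < n ∧ IsStaircase_s8 g ∧ (g 0).2 = w ∧ (g (Fin.last h)).1 = 0 := by
  simp only [placements, Finset.mem_sigma, Finset.mem_product, Finset.mem_range,
    mem_anchoredStaircases]
  grind

/-- The cells covered by a placed staircase. -/
def placementCells (x : Σ p : ℕ × ℕ, (ℕ × ℕ) × (Fin (p.1 + 1) → ℕ × ℕ)) : Set (ℕ × ℕ) :=
  cells x.2.1.1 (shiftColumns x.2.1.2 x.2.2)

theorem mapsTo_placementCells (m n : ℕ) :
    Set.MapsTo placementCells (placements m n)
      {J | IsIntervalSet J ∧ J ⊆ Set.Iio m ×ˢ Set.Iio n} := by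
  rintro ⟨⟨h, w⟩, ⟨a, b⟩, g⟩ hx
  obtain ⟨ham, hbn, hg, hw, -⟩ := mem_placements.1 hx
  have hf : IsStaircase_s8 (shiftColumns b g) := isStaircase_shiftColumns_iff.2 hg
  exact ⟨isIntervalSet_cells hf a,
    (cells_subset_Iio_prod_Iio_iff hf).2 ⟨ham, by rwa [← hw, Nat.add_comm] at hbn⟩⟩

theorem injOn_placementCells (m n : ℕ) :
    Set.InjOn placementCells (placements m n) := by
  rintro ⟨⟨h, w⟩, ⟨a, b⟩, g⟩ hx ⟨⟨h', w'⟩, ⟨a', b'⟩, g'⟩ hx' hcells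
  obtain ⟨-, -, hg, hw, hlast⟩ := mem_placements.1 hx
  obtain ⟨-, -, hg', hw', hlast'⟩ := mem_placements.1 hx'
  have hf := (isStaircase_shiftColumns_iff (b := b)).2 hg
  have hf' := (isStaircase_shiftColumns_iff (b := b')).2 hg'
  obtain ⟨rfl, rfl⟩ : a = a' ∧ h = h' :=
    top_eq_and_height_eq_of_cells_eq hf.fst_le_snd hf'.fst_le_snd hcells
  obtain ⟨rfl, hgg'⟩ : b = b' ∧ g = g' :=
    eq_of_shiftColumns_eq (hlast.trans hlast'.symm) (eq_of_cells_eq hf.fst_le_snd hcells)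
  obtain rfl : w = w' := by rw [← hw, hgg', hw']
  rw [hgg']

theorem surjOn_placementCells (m n : ℕ) :
    Set.SurjOn placementCells (placements m n)
      {J | IsIntervalSet J ∧ J ⊆ Set.Iio m ×ˢ Set.Iio n} := by
  rintro J ⟨hJ, hsub⟩
  obtain ⟨a, h, f, hf, rfl⟩ := hJ.exists_isStaircase_cells_eq
    (((Set.finite_Iio m).prod (Set.finite_Iio n)).subset hsub)
  obtain ⟨ham, hn⟩ := (cells_subset_Iio_prod_Iio_iff hf).1 hsub
  obtain ⟨b, g, hg, hlast, rfl⟩ := hf.exists_eq_shiftColumns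
  exact ⟨⟨(h, (g 0).2), (a, b), g⟩,
    mem_placements.2 ⟨ham, (Nat.add_comm _ _).trans_lt hn, hg, rfl, hlast⟩, rfl⟩

theorem ncard_isIntervalSet_subset_Iio_prod_Iio (m n : ℕ) :
    {J : Set (ℕ × ℕ) | IsIntervalSet J ∧ J ⊆ Set.Iio m ×ˢ Set.Iio n}.ncard =
      (placements m n).card := by
  rw [← Set.ncard_coe_finset]
  exact (Set.BijOn.ncard_eq ⟨mapsTo_placementCells m n, injOn_placementCells m n,
    surjOn_placementCells m n⟩).symm

theorem ncard_isIntervalSet_fin_prod_fin (m n : ℕ) :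
    {I : Set (Fin m × Fin n) | IsIntervalSet I}.ncard =
      {J : Set (ℕ × ℕ) | IsIntervalSet J ∧ J ⊆ Set.Iio m ×ˢ Set.Iio n}.ncard := by
  let e : Fin m × Fin n ↪o ℕ × ℕ :=
    OrderEmbedding.ofMapLEIff (Prod.map Fin.val Fin.val) fun _ _ => Iff.rfl
  have range_e : Set.range e = Set.Iio m ×ˢ Set.Iio n :=
    Set.range_prodMap.trans (by rw [Fin.range_val, Fin.range_val])
  rw [ncard_isIntervalSet_eq_of_orderEmbedding e, range_e]
  exact range_e ▸ ((isLowerSet_Iio m).prod (isLowerSet_Iio n)).ordConnected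

theorem sum_Icc_one_eq_sum_range {M : Type*} [AddCommMonoid M] (F : ℕ → M) (m : ℕ) :
    ∑ h ∈ Finset.Icc 1 m, F h = ∑ h ∈ Finset.range m, F (h + 1) := by
  rw [Finset.range_eq_Ico, Finset.sum_Ico_add']
  rfl

end Placements

/-- The total number of intervals of `Fin m × Fin n`. -/
theorem card_intervals_eq_sum (m n : ℕ) (hm : 0 < m) (hn : 0 < n) :
    {I : Set (Fin m × Fin n) | IsIntervalSet I}.ncard
      = ∑ h ∈ Finset.Icc 1 m, ∑ w ∈ Finset.Icc 1 n,
          (m - h + 1) * (n - w + 1) *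
            (Nat.choose (h + w - 1) (h - 1) * Nat.choose (h + w - 1) (w - 1)
              / (h + w - 1)) := by
  rw [ncard_isIntervalSet_fin_prod_fin, ncard_isIntervalSet_subset_Iio_prod_Iio, card_placements]
  simp only [sum_Icc_one_eq_sum_range]
  refine Finset.sum_congr rfl fun h hh => Finset.sum_congr rfl fun w hw => ?_
  rw [Finset.mem_range] at hh hw
  rw [show m - (h + 1) + 1 = m - h by omega, show n - (w + 1) + 1 = n - w by omega,
    show h + 1 + (w + 1) - 1 = h + w + 1 by omega, Nat.add_sub_cancel, Nat.add_sub_cancel]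
end
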